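/- For any two vectors v, w ∈ S, the real inner product ⟨v,w⟩_ℝ lies in the set {−1, −1/2, 0, 1/2, 1}; in particular 2⟨v,w⟩_ℝ is an integer for all v, w ∈ S. -/

import Mathlib

noncomputable section
open Real Complex

namespace Triacontagonal

/-- The golden ratio. -/
def τ : ℝ := (1 + Real.sqrt 5) / 2

/-- The constant 3^(-1/2) * 5^(-1/4). -/
def k0 : ℝ := (3 : ℝ) ^ (-(1:ℝ)/2) * (5 : ℝ) ^ (-(1:ℝ)/4)

/-- `a` is the positive real with 2a² = 1 + 3^(-1/2)·5^(-1/4)·τ^(3/2). -/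
def a : ℝ := Real.sqrt ((1 + k0 * τ ^ ((3:ℝ)/2)) / 2)

/-- `b` is the positive real with 2b² = 1 + 3^(-1/2)·5^(-1/4)·τ^(-3/2). -/
def b : ℝ := Real.sqrt ((1 + k0 * τ ^ (-((3:ℝ)/2))) / 2)

/-- `c` is the positive real with 2c² = 1 - 3^(-1/2)·5^(-1/4)·τ^(-3/2). -/
def c : ℝ := Real.sqrt ((1 - k0 * τ ^ (-((3:ℝ)/2))) / 2)

/-- `d` is the positive real with 2d² = 1 - 3^(-1/2)·5^(-1/4)·τ^(3/2). -/
def d : ℝ := Real.sqrt ((1 - k0 * τ ^ ((3:ℝ)/2)) / 2)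

/-- `cc n = 2 cos(nπ/30)`. -/
def cc (n : ℤ) : ℝ := 2 * Real.cos (n * Real.pi / 30)

/-- `ω = exp(iπ/30)`, a primitive 60th root of unity. -/
def ω : ℂ := Complex.exp (Real.pi * Complex.I / 30)

def r1 : ℝ := a / cc 9
def r2 : ℝ := b / cc 9
def r3 : ℝ := c / cc 9
def r4 : ℝ := d / cc 9
def r5 : ℝ := a / cc 3
def r6 : ℝ := b / cc 3
def r7 : ℝ := c / cc 3
def r8 : ℝ := d / cc 3

/-- The eight cycles of 30 vectors each in ℂ⁴. -/
def A (n : Fin 30) : Fin 4 → ℂ :=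
  ![(r1 : ℂ) * ω ^ (2 * (n : ℕ)), (r4 : ℂ) * ω ^ (22 * (n : ℕ)),
    (r6 : ℂ) * ω ^ (14 * (n : ℕ) + 1), (r7 : ℂ) * ω ^ (26 * (n : ℕ) + 1)]

def B (n : Fin 30) : Fin 4 → ℂ :=
  ![(r2 : ℂ) * ω ^ (2 * (n : ℕ) + 29), (r3 : ℂ) * ω ^ (22 * (n : ℕ) + 19),
    -((r8 : ℂ) * ω ^ (14 * (n : ℕ) + 24)), -((r5 : ℂ) * ω ^ (26 * (n : ℕ) + 18))]

def C (n : Fin 30) : Fin 4 → ℂ :=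
  ![(r3 : ℂ) * ω ^ (2 * (n : ℕ) + 29), -((r2 : ℂ) * ω ^ (22 * (n : ℕ) + 19)),
    (r5 : ℂ) * ω ^ (14 * (n : ℕ) + 24), -((r8 : ℂ) * ω ^ (26 * (n : ℕ) + 18))]

def D (n : Fin 30) : Fin 4 → ℂ :=
  ![(r4 : ℂ) * ω ^ (2 * (n : ℕ)), -((r1 : ℂ) * ω ^ (22 * (n : ℕ))),
    (r7 : ℂ) * ω ^ (14 * (n : ℕ) + 1), -((r6 : ℂ) * ω ^ (26 * (n : ℕ) + 1))]

def E (n : Fin 30) : Fin 4 → ℂ :=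
  ![(r5 : ℂ) * ω ^ (2 * (n : ℕ)), (r8 : ℂ) * ω ^ (22 * (n : ℕ)),
    -((r2 : ℂ) * ω ^ (14 * (n : ℕ) + 1)), -((r3 : ℂ) * ω ^ (26 * (n : ℕ) + 1))]

def F (n : Fin 30) : Fin 4 → ℂ :=
  ![(r6 : ℂ) * ω ^ (2 * (n : ℕ) + 29), (r7 : ℂ) * ω ^ (22 * (n : ℕ) + 19),
    (r4 : ℂ) * ω ^ (14 * (n : ℕ) + 24), (r1 : ℂ) * ω ^ (26 * (n : ℕ) + 18)]

def G (n : Fin 30) : Fin 4 → ℂ :=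
  ![(r7 : ℂ) * ω ^ (2 * (n : ℕ) + 29), -((r6 : ℂ) * ω ^ (22 * (n : ℕ) + 19)),
    -((r1 : ℂ) * ω ^ (14 * (n : ℕ) + 24)), (r4 : ℂ) * ω ^ (26 * (n : ℕ) + 18)]

def H (n : Fin 30) : Fin 4 → ℂ :=
  ![(r8 : ℂ) * ω ^ (2 * (n : ℕ)), -((r5 : ℂ) * ω ^ (22 * (n : ℕ))),
    -((r3 : ℂ) * ω ^ (14 * (n : ℕ) + 1)), (r2 : ℂ) * ω ^ (26 * (n : ℕ) + 1)]

/-- The set of the 240 vectors. -/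
def S : Set (Fin 4 → ℂ) :=
  {v | ∃ n : Fin 30, v = A n ∨ v = B n ∨ v = C n ∨ v = D n ∨
    v = E n ∨ v = F n ∨ v = G n ∨ v = H n}

/-- The real inner product on ℂ⁴: ⟨v,w⟩_ℝ = Re(Σᵢ vᵢ · conj(wᵢ)). -/
def rinner (v w : Fin 4 → ℂ) : ℝ := (∑ i, v i * star (w i)).re

/-- The associated Euclidean norm. -/
def enorm (v : Fin 4 → ℂ) : ℝ := Real.sqrt (rinner v v)

structure K8 where
  e0 : Int
  e1 : Int
  e2 : Int
  e3 : Int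
  e4 : Int
  e5 : Int
  e6 : Int
  e7 : Int

namespace K8

def mulx : K8 → K8
  | ⟨a0, a1, a2, a3, a4, a5, a6, a7⟩ =>
    ⟨-a7, a0, a1 + 8 * a7, a2, a3 - 14 * a7, a4, a5 + 7 * a7, a6⟩

def add : K8 → K8 → K8
  | ⟨a0, a1, a2, a3, a4, a5, a6, a7⟩, ⟨b0, b1, b2, b3, b4, b5, b6, b7⟩ =>
    ⟨a0 + b0, a1 + b1, a2 + b2, a3 + b3, a4 + b4, a5 + b5, a6 + b6, a7 + b7⟩

def smul (k : Int) : K8 → K8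
  | ⟨b0, b1, b2, b3, b4, b5, b6, b7⟩ =>
    ⟨k * b0, k * b1, k * b2, k * b3, k * b4, k * b5, k * b6, k * b7⟩

def axpy (k : Int) (v r : K8) : K8 :=
  bif k == 0 then mulx r else add (mulx r) (smul k v)

def mul : K8 → K8 → K8
  | ⟨a0, a1, a2, a3, a4, a5, a6, a7⟩, v =>
    axpy a0 v (axpy a1 v (axpy a2 v (axpy a3 v (axpy a4 v (axpy a5 v (axpy a6 v (smul a7 v)))))))

def eqb : K8 → K8 → Bool
  | ⟨a0, a1, a2, a3, a4, a5, a6, a7⟩, ⟨b0, b1, b2, b3, b4, b5, b6, b7⟩ =>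
    a0 == b0 && a1 == b1 && a2 == b2 && a3 == b3 && a4 == b4 && a5 == b5 && a6 == b6 && a7 == b7

def cp : Nat → K8 × K8
  | 0 => (⟨2, 0, 0, 0, 0, 0, 0, 0⟩, ⟨0, 1, 0, 0, 0, 0, 0, 0⟩)
  | n + 1 => ((cp n).2, add (mulx (cp n).2) (smul (-1) (cp n).1))

def cK (n : Nat) : K8 := (cp n).1

def rho : Nat → K8
  | 1 => ⟨0, 3, 0, -4, 0, 1, 0, 0⟩
  | 2 => ⟨-3, 0, 10, 0, -6, 0, 1, 0⟩
  | 3 => ⟨0, 0, -3, 0, 1, 0, 0, 0⟩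
  | 4 => ⟨0, -3, 0, 1, 0, 0, 0, 0⟩
  | 5 => ⟨0, -6, 0, 14, 0, -7, 0, 1⟩
  | 6 => ⟨3, 0, -4, 0, 1, 0, 0, 0⟩
  | 7 => ⟨2, 0, -8, 0, 6, 0, -1, 0⟩
  | _ => ⟨0, 8, 0, -22, 0, 13, 0, -2⟩

def Q : K8 := ⟨10, 0, -10, 0, 5, 0, 0, 0⟩

def good (s : K8) : Bool :=
  eqb s (smul 0 Q) || eqb s Q || eqb s (smul (-1) Q) || eqb s (smul 2 Q) || eqb s (smul (-2) Q)

end K8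
open K8

/-- one letter: signs, radius indices and phases of the four coordinates -/
structure Let where
  s0 : Int
  i0 : Nat
  o0 : Nat
  s1 : Int
  i1 : Nat
  o1 : Nat
  s2 : Int
  i2 : Nat
  o2 : Nat
  s3 : Int
  i3 : Nat
  o3 : Nat

def letters : List Let :=
  [⟨1, 1, 0, 1, 4, 0, 1, 6, 1, 1, 7, 1⟩,
   ⟨1, 2, 29, 1, 3, 19, -1, 8, 24, -1, 5, 18⟩,
   ⟨1, 3, 29, -1, 2, 19, 1, 5, 24, -1, 8, 18⟩,
   ⟨1, 4, 0, -1, 1, 0, 1, 7, 1, -1, 6, 1⟩,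
   ⟨1, 5, 0, 1, 8, 0, -1, 2, 1, -1, 3, 1⟩,
   ⟨1, 6, 29, 1, 7, 19, 1, 4, 24, 1, 1, 18⟩,
   ⟨1, 7, 29, -1, 6, 19, -1, 1, 24, 1, 4, 18⟩,
   ⟨1, 8, 0, -1, 5, 0, -1, 3, 1, 1, 2, 1⟩]

def W (s t : Int) (i j : Nat) : K8 := smul (s * t) (mul (rho i) (rho j))

def tot (w0 w1 w2 w3 : K8) (p q : Let) (e : Nat) : K8 :=
  add (add (mul (cK ((2 * e + p.o0 + 59 * q.o0) % 60)) w0)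
           (mul (cK ((22 * e + p.o1 + 59 * q.o1) % 60)) w1))
      (add (mul (cK ((14 * e + p.o2 + 59 * q.o2) % 60)) w2)
           (mul (cK ((26 * e + p.o3 + 59 * q.o3) % 60)) w3))

def chk (p q : Let) (e : Nat) : Bool :=
  good (tot (W p.s0 q.s0 p.i0 q.i0) (W p.s1 q.s1 p.i1 q.i1)
            (W p.s2 q.s2 p.i2 q.i2) (W p.s3 q.s3 p.i3 q.i3) p q e)

def chk1 (p q : Let) : Bool := (List.range 15).all (chk p q)

def half : List Let → Bool
  | [] => true
  | p :: l => (p :: l).all (fun q => chk1 p q) && half l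

theorem half_spec : ∀ l : List Let, half l = true →
    ∀ p ∈ l, ∀ q ∈ l, chk1 p q = true ∨ chk1 q p = true := by
  intro l
  induction l with
  | nil => intro _ p hp; simp at hp
  | cons x l ih =>
    intro h p hp q hq
    simp only [half, Bool.and_eq_true, List.all_eq_true] at h
    obtain ⟨h1, h2⟩ := h
    rcases List.mem_cons.1 hp with rfl | hp'
    · exact Or.inl (h1 q hq)
    · rcases List.mem_cons.1 hq with rfl | hq'
      · exact Or.inr (h1 p hp)
      · exact ih h2 p hp' q hq'

set_option maxRecDepth 100000 in
theorem half_letters : half letters = true := by decide +kernel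

/-! ### cosines -/

theorem cc_step (k : ℤ) : cc (k + 1) = cc 1 * cc k - cc (k - 1) := by
  unfold cc
  have h1 : ((k + 1 : ℤ) : ℝ) * π / 30 = (k : ℝ) * π / 30 + π / 30 := by push_cast; ring
  have h2 : ((k - 1 : ℤ) : ℝ) * π / 30 = (k : ℝ) * π / 30 - π / 30 := by push_cast; ring
  have h3 : ((1 : ℤ) : ℝ) * π / 30 = π / 30 := by push_cast; ring
  rw [h1, h2, h3, Real.cos_add, Real.cos_sub]
  ring

theorem cc_per (k j : ℤ) : cc (k + 60 * j) = cc k := by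
  unfold cc
  have h1 : ((k + 60 * j : ℤ) : ℝ) * π / 30 = (k : ℝ) * π / 30 + j * (2 * π) := by
    push_cast; ring
  rw [h1, Real.cos_add_int_mul_two_pi]

theorem cc_anti (k : ℤ) : cc (k + 30) = - cc k := by
  unfold cc
  have h1 : ((k + 30 : ℤ) : ℝ) * π / 30 = (k : ℝ) * π / 30 + π := by
    push_cast; ring
  rw [h1, Real.cos_add_pi]; ring

theorem cc_pos (k : ℤ) (h0 : 0 ≤ k) (h : k < 15) : 0 < cc k := by
  unfold cc
  have h1 : (k : ℝ) < 15 := by exact_mod_cast h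
  have h0' : (0 : ℝ) ≤ k := by exact_mod_cast h0
  have hp := Real.pi_pos
  have : 0 < Real.cos ((k : ℝ) * π / 30) := by
    apply Real.cos_pos_of_mem_Ioo
    constructor
    · have : 0 ≤ (k : ℝ) * π / 30 := by positivity
      linarith
    · nlinarith
  linarith

theorem cc_zero : cc 0 = 2 := by simp [cc]

theorem cc_six : cc 6 = τ := by
  unfold cc τ
  have h1 : ((6 : ℤ) : ℝ) * π / 30 = π / 5 := by push_cast; ring
  rw [h1, Real.cos_pi_div_five]; ring

theorem cc_five : cc 5 = √3 := by
  unfold cc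
  have h1 : ((5 : ℤ) : ℝ) * π / 30 = π / 6 := by push_cast; ring
  rw [h1, Real.cos_pi_div_six]; ring

theorem cc_poly : cc 1 ^ 8 - 7 * cc 1 ^ 6 + 14 * cc 1 ^ 4 - 8 * cc 1 ^ 2 + 1 = 0 := by
  have s2 := cc_step 1
  have s3 := cc_step 2
  have s4 := cc_step 3
  have s5 := cc_step 4
  have s6 := cc_step 5
  have s7 := cc_step 6
  have s8 := cc_step 7
  norm_num at s2 s3 s4 s5 s6 s7 s8
  rw [cc_zero] at s2
  have e12 : cc 8 + cc 12 = cc 2 := by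
    unfold cc
    have h1 : ((8 : ℤ) : ℝ) * π / 30 = π / 3 - 2 * π / 30 := by push_cast; ring
    have h2 : ((12 : ℤ) : ℝ) * π / 30 = π / 3 + 2 * π / 30 := by push_cast; ring
    have h3 : ((2 : ℤ) : ℝ) * π / 30 = 2 * π / 30 := by push_cast; ring
    rw [h1, h2, h3, Real.cos_add, Real.cos_sub, Real.cos_pi_div_three]; ring
  have e6 : cc 12 = cc 6 ^ 2 - 2 := by
    unfold cc
    have h1 : ((12 : ℤ) : ℝ) * π / 30 = 2 * (((6 : ℤ) : ℝ) * π / 30) := by push_cast; ring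
    rw [h1, Real.cos_two_mul]; ring
  have g : cc 6 ^ 2 = cc 6 + 1 := by
    rw [cc_six, τ]
    have : √5 ^ 2 = 5 := Real.sq_sqrt (by norm_num)
    nlinarith
  have key : cc 8 + cc 6 - cc 2 - 1 = 0 := by linarith
  rw [s8, s7, s6, s5, s4, s3, s2] at key
  linear_combination key

/-! ### soundness of the arithmetic -/

def ev : K8 → ℝ
  | ⟨a0, a1, a2, a3, a4, a5, a6, a7⟩ =>
    a0 + a1 * cc 1 + a2 * cc 1 ^ 2 + a3 * cc 1 ^ 3 + a4 * cc 1 ^ 4 + a5 * cc 1 ^ 5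
      + a6 * cc 1 ^ 6 + a7 * cc 1 ^ 7

theorem ev_mulx (v : K8) : ev (mulx v) = cc 1 * ev v := by
  obtain ⟨a0, a1, a2, a3, a4, a5, a6, a7⟩ := v
  simp only [mulx, ev]
  push_cast
  linear_combination (-(a7 : ℝ)) * cc_poly

theorem ev_add (u v : K8) : ev (K8.add u v) = ev u + ev v := by
  obtain ⟨a0, a1, a2, a3, a4, a5, a6, a7⟩ := v
  obtain ⟨b0, b1, b2, b3, b4, b5, b6, b7⟩ := u
  simp only [K8.add, ev]
  push_cast
  ring

theorem ev_smul (k : ℤ) (v : K8) : ev (K8.smul k v) = k * ev v := by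
  obtain ⟨a0, a1, a2, a3, a4, a5, a6, a7⟩ := v
  simp only [K8.smul, ev]
  push_cast
  ring

theorem ev_axpy (k : ℤ) (v r : K8) : ev (axpy k v r) = k * ev v + cc 1 * ev r := by
  unfold axpy
  by_cases h : k = 0
  · subst h; simp [ev_mulx]
  · have hb : (k == 0) = false := beq_eq_false_iff_ne.2 h
    rw [hb, cond_false, ev_add, ev_mulx, ev_smul]; ring

theorem ev_mul (u v : K8) : ev (K8.mul u v) = ev u * ev v := by
  obtain ⟨a0, a1, a2, a3, a4, a5, a6, a7⟩ := u
  simp only [K8.mul, ev_axpy, ev_smul]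
  simp only [ev]
  ring

theorem ev_congr {u v : K8} (h : eqb u v = true) : ev u = ev v := by
  obtain ⟨a0, a1, a2, a3, a4, a5, a6, a7⟩ := v
  obtain ⟨b0, b1, b2, b3, b4, b5, b6, b7⟩ := u
  simp only [eqb, Bool.and_eq_true, beq_iff_eq] at h
  obtain ⟨⟨⟨⟨⟨⟨⟨rfl, rfl⟩, rfl⟩, rfl⟩, rfl⟩, rfl⟩, rfl⟩, rfl⟩ := h
  rfl

theorem ev_cp (n : ℕ) : ev (cp n).1 = cc n ∧ ev (cp n).2 = cc ((n : ℤ) + 1) := by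
  induction n with
  | zero => constructor <;> simp [cp, ev, cc_zero]
  | succ n ih =>
    refine ⟨by simpa [cp] using ih.2, ?_⟩
    have := cc_step ((n : ℤ) + 1)
    rw [show ((n : ℤ) + 1 - 1) = n by ring] at this
    simp only [cp, ev_add, ev_mulx, ev_smul, ih.1, ih.2]
    push_cast
    rw [this]; ring

theorem ev_cK (n : ℕ) : ev (cK n) = cc n := (ev_cp n).1

theorem cc_prod3 (i j k : ℕ) {v : K8}
    (h : eqb (K8.mul (K8.mul (cK i) (cK j)) (cK k)) v = true) :
    cc i * cc j * cc k = ev v := by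
  rw [← ev_congr h, ev_mul, ev_mul, ev_cK, ev_cK, ev_cK]

theorem cc_prod2 (i j : ℕ) {v : K8}
    (h : eqb (K8.mul (cK i) (cK j)) v = true) :
    cc i * cc j = ev v := by
  rw [← ev_congr h, ev_mul, ev_cK, ev_cK]

/-! ### the constants -/

theorem id_a : cc 5 * cc 9 + cc 6 = 2 * cc 4 := by
  have := ev_congr (u := K8.add (K8.mul (cK 5) (cK 9)) (cK 6)) (v := smul 2 (cK 4))
    (by decide +kernel)
  simpa [ev_add, ev_mul, ev_smul, ev_cK] using this

theorem id_b : (cc 5 * cc 9 + cc 12 * cc 12) * (cc 1 * cc 12) ^ 2 = 2 * cc 4 := by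
  have := ev_congr (u := K8.mul (K8.add (K8.mul (cK 5) (cK 9)) (K8.mul (cK 12) (cK 12)))
    (K8.mul (K8.mul (cK 1) (cK 12)) (K8.mul (cK 1) (cK 12)))) (v := smul 2 (cK 4))
    (by decide +kernel)
  simp only [ev_add, ev_mul, ev_smul, ev_cK] at this
  push_cast at this
  rw [← this]; ring

theorem id_c : (cc 5 * cc 9 - cc 12 * cc 12) * cc 7 ^ 2 = 2 * cc 4 := by
  have := ev_congr (u := K8.mul (K8.add (K8.mul (cK 5) (cK 9))
    (smul (-1) (K8.mul (cK 12) (cK 12))))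
    (K8.mul (cK 7) (cK 7))) (v := smul 2 (cK 4))
    (by decide +kernel)
  simp only [ev_add, ev_mul, ev_smul, ev_cK] at this
  push_cast at this
  rw [← this]; ring

theorem id_d : (cc 5 * cc 9 - cc 6) * (cc 1 * cc 7) ^ 2 = 2 * cc 4 := by
  have := ev_congr (u := K8.mul (K8.add (K8.mul (cK 5) (cK 9))
    (smul (-1) (cK 6)))
    (K8.mul (K8.mul (cK 1) (cK 7)) (K8.mul (cK 1) (cK 7)))) (v := smul 2 (cK 4))
    (by decide +kernel)
  simp only [ev_add, ev_mul, ev_smul, ev_cK] at this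
  push_cast at this
  rw [← this]; ring

theorem id_612 : cc 6 * cc 12 = 1 := by
  have := ev_congr (u := K8.mul (cK 6) (cK 12)) (v := ⟨1, 0, 0, 0, 0, 0, 0, 0⟩)
    (by decide +kernel)
  simp only [ev_mul, ev_cK] at this
  simpa [ev] using this

theorem id_39 : (cc 3 * cc 9) ^ 2 = 5 := by
  have := ev_congr (u := K8.mul (K8.mul (cK 3) (cK 9)) (K8.mul (cK 3) (cK 9)))
    (v := ⟨5, 0, 0, 0, 0, 0, 0, 0⟩) (by decide +kernel)
  simp only [ev_mul, ev_cK] at this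
  rw [sq]
  simpa [ev] using this

theorem id_Q : ev Q * cc 4 = (cc 1 * cc 7 * (cc 3 * cc 9)) ^ 2 * (cc 5 * cc 9) := by
  have := ev_congr (u := K8.mul Q (cK 4))
    (v := K8.mul (smul 5 (K8.mul (K8.mul (cK 1) (cK 7)) (K8.mul (cK 1) (cK 7))))
      (K8.mul (cK 5) (cK 9))) (by decide +kernel)
  simp only [ev_mul, ev_smul, ev_cK] at this
  rw [mul_pow, id_39]
  push_cast at this
  rw [this]; ring

theorem id_9 : cc 9 ^ 2 * cc 6 = √5 := by
  have h : cc 9 ^ 2 * cc 6 = 2 * cc 6 - 1 := by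
    have := ev_congr (u := K8.mul (K8.mul (cK 9) (cK 9)) (cK 6))
      (v := K8.add (smul 2 (cK 6)) ⟨-1, 0, 0, 0, 0, 0, 0, 0⟩) (by decide +kernel)
    simp only [ev_mul, ev_smul, ev_cK, ev_add] at this
    simp only [ev] at this
    push_cast at this
    linarith
  rw [h, cc_six, τ]; ring

theorem τ_pos : 0 < τ := by unfold τ; positivity

theorem k0_pos : 0 < k0 := by unfold k0; positivity

theorem k0_sq : k0 ^ 2 = 1 / (3 * √5) := by
  unfold k0
  rw [mul_pow, ← Real.rpow_natCast, ← Real.rpow_natCast, ← Real.rpow_mul (by norm_num),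
    ← Real.rpow_mul (by norm_num), Real.sqrt_eq_rpow]
  have h1 : (-(1:ℝ)/2) * ((2 : ℕ) : ℝ) = -1 := by norm_num
  have h2 : (-(1:ℝ)/4) * ((2 : ℕ) : ℝ) = -(1/2) := by norm_num
  rw [h1, h2, Real.rpow_neg (by norm_num), Real.rpow_neg (by norm_num), Real.rpow_one]
  field_simp

theorem s_eq : k0 * τ ^ ((3:ℝ)/2) = cc 6 / (cc 5 * cc 9) := by
  have p5 := cc_pos 5 (by norm_num) (by norm_num)
  have p6 := cc_pos 6 (by norm_num) (by norm_num)
  have p9 := cc_pos 9 (by norm_num) (by norm_num)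
  have hk := k0_pos
  have ht := τ_pos
  have h1 : (τ ^ ((3:ℝ)/2)) ^ 2 = τ ^ 3 := by
    rw [← Real.rpow_natCast, ← Real.rpow_mul ht.le, ← Real.rpow_natCast]
    norm_num
  have h2 : (k0 * τ ^ ((3:ℝ)/2)) ^ 2 = (cc 6 / (cc 5 * cc 9)) ^ 2 := by
    rw [mul_pow, h1, k0_sq, ← id_9, ← cc_six, div_pow, mul_pow]
    have : cc 5 ^ 2 = 3 := by rw [cc_five]; exact Real.sq_sqrt (by norm_num)
    rw [this]
    field_simp
  exact (pow_left_inj₀ (by positivity) (by positivity) two_ne_zero).1 h2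

theorem t_eq : k0 * τ ^ (-((3:ℝ)/2)) = cc 12 * cc 12 / (cc 5 * cc 9) := by
  have p5 := cc_pos 5 (by norm_num) (by norm_num)
  have p6 := cc_pos 6 (by norm_num) (by norm_num)
  have p9 := cc_pos 9 (by norm_num) (by norm_num)
  have ht := τ_pos
  have h1 : τ ^ ((3:ℝ)/2) * τ ^ ((3:ℝ)/2) = τ ^ 3 := by
    rw [← Real.rpow_add ht, ← Real.rpow_natCast]
    norm_num
  have hp : 0 < τ ^ ((3:ℝ)/2) := by positivity
  have h2 : τ ^ (-((3:ℝ)/2)) = τ ^ ((3:ℝ)/2) * cc 12 ^ 3 := by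
    have h612 : τ * cc 12 = 1 := by rw [← cc_six]; exact id_612
    rw [Real.rpow_neg ht.le, inv_eq_iff_eq_inv]
    refine eq_inv_of_mul_eq_one_left ?_
    calc τ ^ ((3:ℝ)/2) * (τ ^ ((3:ℝ)/2) * cc 12 ^ 3)
        = (τ ^ ((3:ℝ)/2) * τ ^ ((3:ℝ)/2)) * cc 12 ^ 3 := by ring
      _ = (τ * cc 12) ^ 3 := by rw [h1]; ring
      _ = 1 := by rw [h612]; norm_num
  rw [h2, ← mul_assoc, s_eq]
  have : cc 6 * cc 12 = 1 := id_612
  field_simp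
  linear_combination cc 12 ^ 2 * this

theorem a_sq : a ^ 2 = cc 4 / (cc 5 * cc 9) := by
  have p5 := cc_pos 5 (by norm_num) (by norm_num)
  have p6 := cc_pos 6 (by norm_num) (by norm_num)
  have p9 := cc_pos 9 (by norm_num) (by norm_num)
  unfold a
  rw [s_eq, Real.sq_sqrt (by positivity)]
  field_simp
  linear_combination id_a

theorem a_nonneg : 0 ≤ a := Real.sqrt_nonneg _

theorem b_eq : b = a / (cc 1 * cc 12) := by
  have p1 := cc_pos 1 (by norm_num) (by norm_num)
  have p5 := cc_pos 5 (by norm_num) (by norm_num)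
  have p9 := cc_pos 9 (by norm_num) (by norm_num)
  have p12 := cc_pos 12 (by norm_num) (by norm_num)
  have ha := a_nonneg
  unfold b
  rw [t_eq, ← Real.sqrt_sq (show 0 ≤ a / (cc 1 * cc 12) by positivity), div_pow, a_sq]
  congr 1
  field_simp
  linear_combination id_b

theorem c_eq : c = a / (cc 7) := by
  have p5 := cc_pos 5 (by norm_num) (by norm_num)
  have p7 := cc_pos 7 (by norm_num) (by norm_num)
  have p9 := cc_pos 9 (by norm_num) (by norm_num)
  have ha := a_nonneg
  unfold c
  rw [t_eq, ← Real.sqrt_sq (show 0 ≤ a / (cc 7) by positivity), div_pow, a_sq]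
  congr 1
  field_simp
  linear_combination id_c

theorem d_eq : d = a / (cc 1 * cc 7) := by
  have p1 := cc_pos 1 (by norm_num) (by norm_num)
  have p5 := cc_pos 5 (by norm_num) (by norm_num)
  have p7 := cc_pos 7 (by norm_num) (by norm_num)
  have p9 := cc_pos 9 (by norm_num) (by norm_num)
  have ha := a_nonneg
  unfold d
  rw [s_eq, ← Real.sqrt_sq (show 0 ≤ a / (cc 1 * cc 7) by positivity), div_pow, a_sq]
  congr 1
  field_simp
  linear_combination id_d

def rr : ℕ → ℝ
  | 1 => r1
  | 2 => r2
  | 3 => r3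
  | 4 => r4
  | 5 => r5
  | 6 => r6
  | 7 => r7
  | _ => r8

def gg : ℝ := a / (cc 1 * cc 7 * (cc 3 * cc 9))

theorem gg_sq : gg ^ 2 * ev Q = 1 := by
  have p1 := cc_pos 1 (by norm_num) (by norm_num)
  have p3 := cc_pos 3 (by norm_num) (by norm_num)
  have p4 := cc_pos 4 (by norm_num) (by norm_num)
  have p5 := cc_pos 5 (by norm_num) (by norm_num)
  have p7 := cc_pos 7 (by norm_num) (by norm_num)
  have p9 := cc_pos 9 (by norm_num) (by norm_num)
  unfold gg
  rw [div_pow, a_sq]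
  have := id_Q
  field_simp
  linear_combination this

theorem rr_eq (i : ℕ) : rr i = gg * ev (rho i) := by
  have p1 := cc_pos 1 (by norm_num) (by norm_num)
  have p3 := cc_pos 3 (by norm_num) (by norm_num)
  have p7 := cc_pos 7 (by norm_num) (by norm_num)
  have p9 := cc_pos 9 (by norm_num) (by norm_num)
  have p12 := cc_pos 12 (by norm_num) (by norm_num)
  have h612 := id_612
  have h1 := cc_prod3 1 7 3 (v := rho 1) (by decide +kernel)
  have h2 := cc_prod3 7 6 3 (v := rho 2) (by decide +kernel)
  have h3 := cc_prod2 1 3 (v := rho 3) (by decide +kernel)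
  have h4 := cc_prod2 0 3 (v := smul 2 (rho 4)) (by decide +kernel)
  have h5 := cc_prod3 1 7 9 (v := rho 5) (by decide +kernel)
  have h6 := cc_prod3 7 6 9 (v := rho 6) (by decide +kernel)
  have h7 := cc_prod2 1 9 (v := rho 7) (by decide +kernel)
  have h8 := cc_prod2 0 9 (v := smul 2 (rho 8)) (by decide +kernel)
  rw [ev_smul] at h4 h8
  push_cast at h1 h2 h3 h4 h5 h6 h7 h8
  rw [cc_zero] at h4 h8
  have h4' : cc 3 = ev (rho 4) := by linarith
  have h8' : cc 9 = ev (rho 8) := by linarith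
  unfold rr
  split
  · rw [← h1, r1, gg]; field_simp
  · rw [← h2, r2, b_eq, gg]; field_simp; linear_combination (-a) * h612
  · rw [← h3, r3, c_eq, gg]; field_simp
  · rw [← h4', r4, d_eq, gg]; field_simp
  · rw [← h5, r5, gg]; field_simp
  · rw [← h6, r6, b_eq, gg]; field_simp; linear_combination (-a) * h612
  · rw [← h7, r7, c_eq, gg]; field_simp
  · rename_i h1 h2 h3 h4 h5 h6 h7
    have : rho i = rho 8 := by
      unfold rho
      split <;> simp_all
    rw [this, ← h8', r8, d_eq, gg]; field_simp

/-! ### the vectors -/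

def vec (p : Let) (n : ℕ) : Fin 4 → ℂ :=
  ![((p.s0 * rr p.i0 : ℝ) : ℂ) * ω ^ (2 * n + p.o0),
    ((p.s1 * rr p.i1 : ℝ) : ℂ) * ω ^ (22 * n + p.o1),
    ((p.s2 * rr p.i2 : ℝ) : ℂ) * ω ^ (14 * n + p.o2),
    ((p.s3 * rr p.i3 : ℝ) : ℂ) * ω ^ (26 * n + p.o3)]

theorem mem_S {v : Fin 4 → ℂ} (h : v ∈ S) : ∃ p ∈ letters, ∃ n : ℕ, v = vec p n := by
  obtain ⟨n, h⟩ := h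
  rcases h with rfl | rfl | rfl | rfl | rfl | rfl | rfl | rfl
  · exact ⟨_, .head _, n, by simp [vec, A, rr]⟩
  · exact ⟨_, .tail _ (.head _), n, by simp [vec, B, rr]⟩
  · exact ⟨_, .tail _ (.tail _ (.head _)), n, by simp [vec, C, rr]⟩
  · exact ⟨_, .tail _ (.tail _ (.tail _ (.head _))), n, by simp [vec, D, rr]⟩
  · exact ⟨_, .tail _ (.tail _ (.tail _ (.tail _ (.head _)))), n, by simp [vec, E, rr]⟩
  · exact ⟨_, .tail _ (.tail _ (.tail _ (.tail _ (.tail _ (.head _))))), n,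
      by simp [vec, F, rr]⟩
  · exact ⟨_, .tail _ (.tail _ (.tail _ (.tail _ (.tail _ (.tail _ (.head _)))))), n,
      by simp [vec, G, rr]⟩
  · exact ⟨_, .tail _ (.tail _ (.tail _ (.tail _ (.tail _ (.tail _ (.tail _ (.head _))))))), n,
      by simp [vec, H, rr]⟩

theorem ω_pow (n : ℕ) : ω ^ n = ((Real.cos (n * π / 30) : ℝ) : ℂ)
    + ((Real.sin (n * π / 30) : ℝ) : ℂ) * Complex.I := by
  rw [ω, ← Complex.exp_nat_mul]
  have : (n : ℂ) * (π * Complex.I / 30) = ((n * π / 30 : ℝ) : ℂ) * Complex.I := by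
    push_cast; ring
  rw [this, Complex.exp_mul_I]
  push_cast; rfl

theorem term_re (x y : ℝ) (m n : ℕ) :
    (((x : ℂ) * ω ^ m) * star ((y : ℂ) * ω ^ n)).re = x * y * (cc ((m : ℤ) - n) / 2) := by
  rw [ω_pow, ω_pow, cc]
  have h1 : (((m : ℤ) - n : ℤ) : ℝ) * π / 30 = m * π / 30 - n * π / 30 := by push_cast; ring
  rw [h1, Real.cos_sub]
  generalize Real.cos (m * π / 30) = c1
  generalize Real.cos (n * π / 30) = c2
  generalize Real.sin (m * π / 30) = s1
  generalize Real.sin (n * π / 30) = s2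
  simp
  ring

theorem rinner_vec (p q : Let) (n m : ℕ) : 2 * rinner (vec p n) (vec q m) =
    (p.s0 * rr p.i0) * (q.s0 * rr q.i0) * cc (((2 * n + p.o0 : ℕ) : ℤ) - (2 * m + q.o0 : ℕ)) +
    (p.s1 * rr p.i1) * (q.s1 * rr q.i1) * cc (((22 * n + p.o1 : ℕ) : ℤ) - (22 * m + q.o1 : ℕ)) +
    (p.s2 * rr p.i2) * (q.s2 * rr q.i2) * cc (((14 * n + p.o2 : ℕ) : ℤ) - (14 * m + q.o2 : ℕ)) +
    (p.s3 * rr p.i3) * (q.s3 * rr q.i3) * cc (((26 * n + p.o3 : ℕ) : ℤ) - (26 * m + q.o3 : ℕ))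
    := by
  unfold rinner vec
  rw [Fin.sum_univ_four]
  simp only [Complex.add_re]
  simp only [Matrix.cons_val]
  rw [term_re, term_re, term_re, term_re]
  ring

theorem rinner_comm (v w : Fin 4 → ℂ) : rinner v w = rinner w v := by
  unfold rinner
  rw [Fin.sum_univ_four, Fin.sum_univ_four]
  simp
  ring

theorem phase (n m : ℕ) : ∃ e < 15, ∃ σ : ℤ, (σ = 1 ∨ σ = -1) ∧ ∀ t o o' : ℕ,
    cc (((2 * (2 * t + 1) * n + o : ℕ) : ℤ) - (2 * (2 * t + 1) * m + o' : ℕ)) =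
      σ * cc (((2 * (2 * t + 1) * e + o + 59 * o') % 60 : ℕ) : ℤ) := by
  have key : ∀ a : ℕ, cc ((a % 60 : ℕ) : ℤ) = cc (a : ℤ) := by
    intro a
    rw [← cc_per ((a % 60 : ℕ) : ℤ) ((a / 60 : ℕ) : ℤ)]
    congr 1
    have := Nat.mod_add_div a 60
    exact_mod_cast this
  set q : ℤ := ((n : ℤ) - m) / 15 with hq
  obtain ⟨e, he⟩ : ∃ e : ℕ, (e : ℤ) = ((n : ℤ) - m) % 15 :=
    ⟨(((n : ℤ) - m) % 15).toNat, Int.toNat_of_nonneg (Int.emod_nonneg _ (by norm_num))⟩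
  have hd : (n : ℤ) - m = e + 15 * q := by
    rw [he]; exact (Int.emod_add_mul_ediv _ _).symm
  refine ⟨e, by omega, ?_⟩
  rcases Int.even_or_odd' q with ⟨j, hj | hj⟩
  · refine ⟨1, Or.inl rfl, fun t o o' => ?_⟩
    rw [key, ← cc_per ((2 * (2 * t + 1) * e + o + 59 * o' : ℕ) : ℤ) ((2 * t + 1) * j - o')]
    push_cast
    rw [one_mul]
    congr 1
    rw [hj] at hd
    linear_combination (2 * (2 * t + 1) : ℤ) * hd
  · refine ⟨-1, Or.inr rfl, fun t o o' => ?_⟩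
    rw [key, ← cc_per ((2 * (2 * t + 1) * e + o + 59 * o' : ℕ) : ℤ) ((2 * t + 1) * j - o' + t)]
    push_cast
    rw [neg_one_mul, ← cc_anti]
    congr 1
    rw [hj] at hd
    linear_combination (2 * (2 * t + 1) : ℤ) * hd

theorem good_spec {s : K8} (h : good s = true) :
    ∃ N : ℤ, (N = 0 ∨ N = 1 ∨ N = -1 ∨ N = 2 ∨ N = -2) ∧ ev s = N * ev Q := by
  unfold good at h
  simp only [Bool.or_eq_true] at h
  rcases h with (((h | h) | h) | h) | h
  · exact ⟨0, by simp, by rw [ev_congr h, ev_smul]⟩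
  · exact ⟨1, by simp, by rw [ev_congr h]; simp⟩
  · exact ⟨-1, by simp, by rw [ev_congr h, ev_smul]⟩
  · exact ⟨2, by simp, by rw [ev_congr h, ev_smul]⟩
  · exact ⟨-2, by simp, by rw [ev_congr h, ev_smul]⟩

theorem main_chk {p q : Let} (h : chk1 p q = true) (n m : ℕ) :
    ∃ N : ℤ, (N = 0 ∨ N = 1 ∨ N = -1 ∨ N = 2 ∨ N = -2) ∧
      2 * rinner (vec p n) (vec q m) = N := by
  obtain ⟨e, he, σ, hσ, ph⟩ := phase n m
  unfold chk1 at h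
  rw [List.all_eq_true] at h
  obtain ⟨N, hN, hs⟩ := good_spec (h e (List.mem_range.2 he))
  refine ⟨σ * N, by rcases hσ with rfl | rfl <;> omega, ?_⟩
  have f0 := ph 0 p.o0 q.o0
  have f1 := ph 5 p.o1 q.o1
  have f2 := ph 3 p.o2 q.o2
  have f3 := ph 6 p.o3 q.o3
  norm_num only at f0 f1 f2 f3
  unfold tot W at hs
  simp only [ev_add, ev_mul, ev_smul, ev_cK] at hs
  rw [rinner_vec, f0, f1, f2, f3]
  simp only [rr_eq]
  have hg := gg_sq
  push_cast at hs ⊢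
  linear_combination (σ * gg ^ 2 : ℝ) * hs + (σ * N : ℝ) * hg

theorem main_S {v w : Fin 4 → ℂ} (hv : v ∈ S) (hw : w ∈ S) :
    ∃ N : ℤ, (N = 0 ∨ N = 1 ∨ N = -1 ∨ N = 2 ∨ N = -2) ∧ 2 * rinner v w = N := by
  obtain ⟨p, hp, n, rfl⟩ := mem_S hv
  obtain ⟨q, hq, m, rfl⟩ := mem_S hw
  rcases half_spec letters half_letters p hp q hq with h | h
  · exact main_chk h n m
  · rw [rinner_comm]; exact main_chk h m n

/-- all inner products between members of S lie in {−1, −1/2, 0, 1/2, 1};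
in particular twice any such inner product is an integer. -/
theorem stmt9 :
    (∀ v ∈ S, ∀ w ∈ S, rinner v w ∈ ({-1, -(1/2), 0, 1/2, 1} : Set ℝ)) ∧
    (∀ v ∈ S, ∀ w ∈ S, ∃ m : ℤ, 2 * rinner v w = (m : ℝ)) := by
  refine ⟨fun v hv w hw => ?_, fun v hv w hw => ?_⟩
  · obtain ⟨N, hN, h⟩ := main_S hv hw
    have h' : rinner v w = N / 2 := by linarith
    rw [h']
    rcases hN with rfl | rfl | rfl | rfl | rfl <;> norm_num
  · obtain ⟨N, -, h⟩ := main_S hv hw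
    exact ⟨N, h⟩

end Triacontagonal
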